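/- arXiv:2503.20657 — 3 statements merged into one kernel-verified Lean document; each statement's English description precedes it below -/
import Mathlib

section
/- Let n ≥ 1 and m ≥ 2 be integers and let ξ₁, …, ξ_m be points of the open unit ball 𝔹_n = {z ∈ ℂⁿ : |z| < 1}, with indices taken modulo m (ξ_{m+1} := ξ₁). Then ∏_{j=1}^{m} |1 − ⟨ξ_j, ξ_{j+1}⟩| / (1 − |ξ_j|²) ≥ 1, and equality holds if and only if ξ₁ = ξ₂ = ⋯ = ξ_m. (Equivalently, the imaginary part of the phase function Φ(ξ₁,…,ξ_m) = i Log ∏_{j=1}^m (1 − ⟨ξ_j,ξ_{j+1}⟩)/(1 − |ξ_j|²) is nonnegative, vanishing exactly on the diagonal.) -/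
open scoped ComplexOrder

lemma phase_aux {E : Type*} [NormedAddCommGroup E] [InnerProductSpace ℂ E] (z w : E)
    (hz : ‖z‖ < 1) (hw : ‖w‖ < 1) :
    √(1 - ‖z‖ ^ 2) * √(1 - ‖w‖ ^ 2) ≤ ‖1 - (inner ℂ w z : ℂ)‖ ∧
    (√(1 - ‖z‖ ^ 2) * √(1 - ‖w‖ ^ 2) = ‖1 - (inner ℂ w z : ℂ)‖ → z = w) := by
  have hz0 := norm_nonneg z
  have hw0 := norm_nonneg w
  have h1 : (inner ℂ w z : ℂ).re ≤ ‖w‖ * ‖z‖ := by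
    simpa using re_inner_le_norm (𝕜 := ℂ) w z
  have h2 : 1 - (inner ℂ w z : ℂ).re ≤ ‖1 - (inner ℂ w z : ℂ)‖ := by
    simpa using Complex.re_le_norm (1 - (inner ℂ w z : ℂ))
  have h3 : ‖w‖ * ‖z‖ < 1 := by nlinarith
  have h4 : (√(1 - ‖z‖ ^ 2) * √(1 - ‖w‖ ^ 2)) ^ 2 = (1 - ‖z‖ ^ 2) * (1 - ‖w‖ ^ 2) := by
    rw [mul_pow, Real.sq_sqrt (by nlinarith), Real.sq_sqrt (by nlinarith)]
  have h5 : √(1 - ‖z‖ ^ 2) * √(1 - ‖w‖ ^ 2) ≤ 1 - ‖w‖ * ‖z‖ := by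
    refine (sq_le_sq₀ (by positivity) (by linarith)).mp ?_
    rw [h4]
    nlinarith [sq_nonneg (‖w‖ - ‖z‖)]
  refine ⟨by linarith, fun he => ?_⟩
  have h6 : √(1 - ‖z‖ ^ 2) * √(1 - ‖w‖ ^ 2) = 1 - ‖w‖ * ‖z‖ := by linarith
  have h7 : (inner ℂ w z : ℂ).re = ‖w‖ * ‖z‖ := by linarith
  rw [h6] at h4
  have h8 : ‖w - z‖ ^ 2 = 0 := by
    have := norm_sub_sq (𝕜 := ℂ) w z
    simp only [RCLike.re_to_complex] at this
    rw [this, h7]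
    nlinarith
  have h9 : ‖w - z‖ = 0 := by simpa using h8
  exact (sub_eq_zero.mp (norm_eq_zero.mp h9)).symm

/-- **Lemma 3.2 (positivity of the imaginary part of the phase).** For points
`ξ₁, …, ξ_m` of the open unit ball of `ℂⁿ` (indices mod `m`),
`∏_j |1 − ⟨ξ_j, ξ_{j+1}⟩| / (1 − |ξ_j|²) ≥ 1`, with equality iff
`ξ₁ = ⋯ = ξ_m`.  Here `⟨z, w⟩ = Σ z_ℓ conj(w_ℓ)`, which in Mathlib's convention
(conjugate-linear in the first slot) is `inner w z`. -/
theorem phase_product_ge_one (n m : ℕ) (hn : 1 ≤ n) (hm : 2 ≤ m) [NeZero m]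
    (ξ : Fin m → EuclideanSpace ℂ (Fin n)) (hξ : ∀ j, ‖ξ j‖ < 1) :
    1 ≤ ∏ j : Fin m,
        ‖1 - (inner ℂ (ξ (j + 1)) (ξ j) : ℂ)‖ / (1 - ‖ξ j‖ ^ 2) ∧
    ((∏ j : Fin m,
        ‖1 - (inner ℂ (ξ (j + 1)) (ξ j) : ℂ)‖ / (1 - ‖ξ j‖ ^ 2)) = 1 ↔
      ∀ j k : Fin m, ξ j = ξ k) := by
  have hs : ∀ j, 0 < √(1 - ‖ξ j‖ ^ 2) := fun j => by
    apply Real.sqrt_pos.mpr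
    nlinarith [hξ j, norm_nonneg (ξ j)]
  set f : Fin m → ℝ := fun j => ‖1 - (inner ℂ (ξ (j + 1)) (ξ j) : ℂ)‖ /
    (√(1 - ‖ξ j‖ ^ 2) * √(1 - ‖ξ (j + 1)‖ ^ 2)) with hf
  have hR : ∏ j, √(1 - ‖ξ (j + 1)‖ ^ 2) = ∏ j, √(1 - ‖ξ j‖ ^ 2) :=
    Equiv.prod_comp (Equiv.addRight (1 : Fin m)) (fun j => √(1 - ‖ξ j‖ ^ 2))
  have hP : (∏ j : Fin m, ‖1 - (inner ℂ (ξ (j + 1)) (ξ j) : ℂ)‖ / (1 - ‖ξ j‖ ^ 2)) = ∏ j, f j := by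
    rw [hf, Finset.prod_div_distrib, Finset.prod_div_distrib, Finset.prod_mul_distrib,
      hR,
      ← Finset.prod_mul_distrib]
    congr 1
    refine Finset.prod_congr rfl fun j _ => ?_
    rw [Real.mul_self_sqrt]
    nlinarith [hξ j, norm_nonneg (ξ j)]
  have h1 : ∀ j, 1 ≤ f j := fun j => by
    rw [hf]
    exact (one_le_div (mul_pos (hs _) (hs _))).mpr (phase_aux _ _ (hξ j) (hξ (j + 1))).1
  rw [hP]
  refine ⟨?_, fun he => ?_, fun he => ?_⟩
  · simpa using Finset.prod_le_prod (s := Finset.univ) (f := fun _ : Fin m => (1 : ℝ)) (g := f)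
      (fun _ _ => zero_le_one) (fun i _ => h1 i)
  · have h2 : ∀ j, f j = 1 := by
      by_contra! hc
      obtain ⟨j, hj⟩ := hc
      have := Finset.prod_lt_prod (s := Finset.univ) (f := fun _ : Fin m => (1 : ℝ)) (g := f)
        (fun _ _ => one_pos) (fun i _ => h1 i) ⟨j, Finset.mem_univ _, lt_of_le_of_ne (h1 j) hj.symm⟩
      simp [he] at this
    have h3 : ∀ j, ξ j = ξ (j + 1) := fun j => by
      refine (phase_aux _ _ (hξ j) (hξ (j + 1))).2 ?_
      exact ((div_eq_one_iff_eq (mul_pos (hs _) (hs _)).ne').mp (h2 j)).symm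
    have h4 : ∀ j, ξ j = ξ 0 := by
      obtain ⟨k, rfl⟩ : ∃ k, m = k + 1 := ⟨m - 1, by omega⟩
      intro j
      induction j using Fin.induction with
      | zero => rfl
      | succ i ih =>
        rw [← Fin.coeSucc_eq_succ, ← ih]
        exact (h3 _).symm
    intro j k
    rw [h4 j, h4 k]
  · rw [← hP]
    refine Finset.prod_eq_one fun j _ => ?_
    have hp : 0 < 1 - ‖ξ j‖ ^ 2 := Real.sqrt_pos.mp (hs j)
    rw [he (j + 1) j, inner_self_eq_norm_sq_to_K]
    have : (1 - ((‖ξ j‖ : ℝ) : ℂ) ^ 2) = ((1 - ‖ξ j‖ ^ 2 : ℝ) : ℂ) := by push_cast; rfl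
    rw [div_eq_one_iff_eq hp.ne']
    erw [this]
    rw [Complex.norm_real, Real.norm_of_nonneg hp.le]
end

section
/- Let ε > 0, p > 0, R > 0, M ≥ 0, and let φ : [0,R] → ℂ be a continuous function with |φ(s)| ≤ M s^{p} for all s ∈ [0,R]. Then for every t ∈ (0,R], the integral Q_ε(φ)(t) = (1/Γ(ε)) ∫₀ᵗ φ(s) (ln(t/s))^{ε−1} ds/s converges and satisfies |Q_ε(φ)(t)| ≤ M t^{p}/p^{ε}. -/
open MeasureTheory

theorem Q_eps_aux_image (t : ℝ) (ht : 0 < t) :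
    (fun u : ℝ => t * Real.exp (-u)) '' Set.Ioi 0 = Set.Ioo 0 t := by
  ext s
  constructor
  · rintro ⟨u, hu, rfl⟩
    have hu' : 0 < u := hu
    refine ⟨by positivity, ?_⟩
    have : Real.exp (-u) < 1 := by rw [Real.exp_lt_one_iff]; linarith
    show t * Real.exp (-u) < t
    nlinarith
  · rintro ⟨h0, h1⟩
    refine ⟨Real.log (t / s), Real.log_pos ((one_lt_div h0).2 h1), ?_⟩
    show t * Real.exp (-Real.log (t / s)) = s
    rw [Real.exp_neg, Real.exp_log (by positivity)]
    field_simp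

theorem Q_eps_aux (ε p t : ℝ) (hε : 0 < ε) (hp : 0 < p) (ht : 0 < t) :
    IntegrableOn (fun s : ℝ => s ^ p * (Real.log (t / s) ^ (ε - 1) / s)) (Set.Ioo 0 t) ∧
    ∫ s in Set.Ioo (0 : ℝ) t, s ^ p * (Real.log (t / s) ^ (ε - 1) / s)
      = t ^ p * ((1 / p) ^ ε * Real.Gamma ε) := by
  have hd : ∀ u ∈ Set.Ioi (0 : ℝ), HasDerivWithinAt (fun u : ℝ => t * Real.exp (-u))
      (-(t * Real.exp (-u))) (Set.Ioi 0) u := by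
    intro u _
    have := ((hasDerivAt_neg u).exp.const_mul t).hasDerivWithinAt (s := Set.Ioi 0)
    refine this.congr_deriv ?_
    simp
  have hinj : Set.InjOn (fun u : ℝ => t * Real.exp (-u)) (Set.Ioi 0) := by
    intro a _ b _ hab
    have h1 : Real.exp (-a) = Real.exp (-b) := mul_left_cancel₀ ht.ne' hab
    have := Real.exp_injective h1
    linarith
  have heq : ∀ u ∈ Set.Ioi (0 : ℝ), |(-(t * Real.exp (-u)))| •
      ((t * Real.exp (-u)) ^ p *
        (Real.log (t / (t * Real.exp (-u))) ^ (ε - 1) / (t * Real.exp (-u))))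
      = t ^ p * (u ^ (ε - 1) * Real.exp (-(p * u))) := by
    intro u _
    have h1 : t / (t * Real.exp (-u)) = Real.exp u := by
      rw [Real.exp_neg]; field_simp
    rw [h1, Real.log_exp, abs_neg, abs_of_pos (by positivity),
      Real.mul_rpow ht.le (Real.exp_pos _).le, ← Real.exp_mul, smul_eq_mul,
      show -u * p = -(p * u) by ring]
    have := (Real.exp_pos (-u)).ne'
    field_simp
  have hint : IntegrableOn (fun u : ℝ => u ^ (ε - 1) * Real.exp (-(p * u))) (Set.Ioi 0) := by
    have := integrableOn_rpow_mul_exp_neg_mul_rpow (p := 1) (s := ε - 1) (b := p)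
      (by linarith) one_pos hp
    simpa using this
  constructor
  · rw [← Q_eps_aux_image t ht,
      integrableOn_image_iff_integrableOn_abs_deriv_smul measurableSet_Ioi hd hinj,
      integrableOn_congr_fun heq measurableSet_Ioi]
    exact hint.const_mul _
  · rw [← Q_eps_aux_image t ht,
      integral_image_eq_integral_abs_deriv_smul measurableSet_Ioi hd hinj,
      setIntegral_congr_fun measurableSet_Ioi heq, integral_const_mul,
      Real.integral_rpow_mul_exp_neg_mul_Ioi hε hp]

/-- **Proposition 4.6 c).** If `φ : [0,R] → ℂ` is continuous with
`|φ(s)| ≤ M s^p` on `[0,R]`, then for every `t ∈ (0,R]` the integral defining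
`Q_ε(φ)(t) = (1/Γ(ε)) ∫₀ᵗ φ(s) (ln(t/s))^{ε−1} ds/s` converges and
`|Q_ε(φ)(t)| ≤ M t^p / p^ε`. -/
theorem Q_eps_bound (ε p R M : ℝ) (hε : 0 < ε) (hp : 0 < p) (hR : 0 < R)
    (hM : 0 ≤ M) (φ : ℝ → ℂ) (hcont : ContinuousOn φ (Set.Icc 0 R))
    (hbound : ∀ s ∈ Set.Icc (0 : ℝ) R, norm (φ s) ≤ M * s ^ p) :
    ∀ t ∈ Set.Ioc (0 : ℝ) R,
      IntegrableOn
          (fun s : ℝ => φ s * ((Real.log (t / s) ^ (ε - 1) / s : ℝ) : ℂ))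
          (Set.Ioo 0 t) ∧
      norm (((1 / Real.Gamma ε : ℝ) : ℂ) *
          ∫ s in Set.Ioo (0 : ℝ) t,
            φ s * ((Real.log (t / s) ^ (ε - 1) / s : ℝ) : ℂ))
        ≤ M * t ^ p / p ^ ε := by
  intro t ht
  obtain ⟨ht0, htR⟩ := ht
  obtain ⟨hI, hV⟩ := Q_eps_aux ε p t hε hp ht0
  have hle : ∀ s ∈ Set.Ioo (0 : ℝ) t,
      ‖φ s * ((Real.log (t / s) ^ (ε - 1) / s : ℝ) : ℂ)‖ ≤
        M * (s ^ p * (Real.log (t / s) ^ (ε - 1) / s)) := by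
    intro s hs
    have hs0 : 0 < s := hs.1
    have hl : 0 < Real.log (t / s) := Real.log_pos ((one_lt_div hs0).2 hs.2)
    have hk : 0 ≤ Real.log (t / s) ^ (ε - 1) / s := by positivity
    rw [norm_mul, Complex.norm_real, Real.norm_of_nonneg hk, ← mul_assoc]
    exact mul_le_mul_of_nonneg_right (hbound s ⟨hs0.le, hs.2.le.trans htR⟩) hk
  have hae := (ae_restrict_iff' (μ := volume) measurableSet_Ioo).2 (Filter.Eventually.of_forall hle)
  have hφ : AEStronglyMeasurable φ (volume.restrict (Set.Ioo 0 t)) :=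
    (hcont.mono fun s hs => ⟨hs.1.le, hs.2.le.trans htR⟩).aestronglyMeasurable measurableSet_Ioo
  have hmeas : Measurable fun s : ℝ => ((Real.log (t / s) ^ (ε - 1) / s : ℝ) : ℂ) := by
    fun_prop
  have hMI := hI.const_mul M
  refine ⟨Integrable.mono' hMI (hφ.mul hmeas.aestronglyMeasurable) hae, ?_⟩
  have hn := norm_integral_le_of_norm_le hMI hae
  rw [integral_const_mul, hV] at hn
  have hG := Real.Gamma_pos_of_pos hε
  rw [norm_mul, Complex.norm_real, Real.norm_of_nonneg (by positivity)]
  refine (mul_le_mul_of_nonneg_left hn (by positivity)).trans (le_of_eq ?_)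
  rw [Real.div_rpow zero_le_one hp.le, Real.one_rpow]
  field_simp
end

section
/- Let X be a finite-dimensional real inner product space, J : X → X a linear isometry with J ∘ J = −id, and V ⊆ X a co-isotropic subspace (i.e. V^ω ⊆ V). Then the image of the map K_V : V → V, K_V(v) = Π_V(J v), equals J(V) ∩ V. -/
/-- The symplectic complement `V^ω = {ξ : ∀ v ∈ V, ω(ξ,v) = 0}` of a subspace `V`
of a real inner product space with compatible complex structure `J`, where
`ω(u,v) = ⟪u, J v⟫`. -/
def sympComp {X : Type*} [NormedAddCommGroup X] [InnerProductSpace ℝ X]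
    (J : X →ₗ[ℝ] X) (V : Submodule ℝ X) : Submodule ℝ X where
  carrier := {ξ : X | ∀ v ∈ V, (inner ℝ ξ (J v) : ℝ) = 0}
  zero_mem' := by intro v hv; simp
  add_mem' := by
    intro a b ha hb v hv
    rw [inner_add_left, ha v hv, hb v hv, add_zero]
  smul_mem' := by
    intro c a ha v hv
    rw [real_inner_smul_left, ha v hv, mul_zero]

/-- The map `K_V = Π_V ∘ J`, viewed as an endomorphism of the ambient space
(`Π_V` is the orthogonal projection onto `V`). -/
noncomputable def KV {X : Type*} [NormedAddCommGroup X] [InnerProductSpace ℝ X]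
    [FiniteDimensional ℝ X] (J : X →ₗ[ℝ] X) (V : Submodule ℝ X) : X →ₗ[ℝ] X :=
  V.subtype ∘ₗ V.orthogonalProjectionOnto.toLinearMap ∘ₗ J

/-- **Proposition B.7.** If `V` is a co-isotropic subspace (`V^ω ⊆ V`), then the
image of `K_V = Π_V ∘ J|_V : V → V` equals `J(V) ∩ V`. -/
theorem KV_image_of_coisotropic {X : Type*} [NormedAddCommGroup X]
    [InnerProductSpace ℝ X] [FiniteDimensional ℝ X]
    (J : X →ₗ[ℝ] X) (hJiso : ∀ x, ‖J x‖ = ‖x‖) (hJ2 : ∀ x, J (J x) = -x)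
    (V : Submodule ℝ X) (hco : sympComp J V ≤ V) :
    Submodule.map (KV J V) V = Submodule.map J V ⊓ V := by
  have hinner : ∀ x y : X, (inner ℝ (J x) (J y) : ℝ) = inner ℝ x y := fun x y =>
    LinearIsometry.inner_map_map (⟨J, hJiso⟩ : X →ₗᵢ[ℝ] X) x y
  ext w
  constructor
  · rintro ⟨v, hv, rfl⟩
    have hw : KV J V v ∈ V := (V.orthogonalProjectionOnto (J v)).2
    have hn : J v - KV J V v ∈ Vᗮ := V.sub_starProjection_mem_orthogonal (J v)
    refine ⟨⟨v + J (J v - KV J V v), V.add_mem hv (hco ?_), ?_⟩, hw⟩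
    · intro u hu
      rw [hinner]
      exact Submodule.inner_left_of_mem_orthogonal hu hn
    · rw [map_add, hJ2]
      abel
  · rintro ⟨⟨v, hv, rfl⟩, hw⟩
    exact ⟨v, hv, Submodule.starProjection_eq_self_iff.mpr hw⟩
end
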